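/- The four simple graphs H₃, H₆, H₇, H₉ on vertex set {0,1,…,11} defined in the context are pairwise non-isomorphic (there is no graph isomorphism between any two distinct ones). -/

import Mathlib

open Polynomial SimpleGraph

/-- Edge list (each unordered edge listed once) of the graph `H3`. -/
def edgesH3 : List (Fin 12 × Fin 12) :=
  [(0, 1), (0, 3), (0, 5), (0, 7), (1, 2), (1, 4), (1, 8), (1, 9), (2, 3), (2, 6), (2, 9), (2, 10), (3, 4), (3, 11), (4, 5), (4, 8), (4, 9), (5, 6), (5, 8), (5, 10), (6, 7), (6, 9), (6, 10), (7, 8), (7, 11), (8, 10), (9, 11), (10, 11)]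

/-- The simple graph on vertex set `Fin 12` with the given edge set. -/
def H3 : SimpleGraph (Fin 12) :=
  SimpleGraph.fromRel (fun i j => (i, j) ∈ edgesH3)

instance : DecidableRel H3.Adj := fun a b =>
  inferInstanceAs (Decidable (a ≠ b ∧ ((a, b) ∈ edgesH3 ∨ (b, a) ∈ edgesH3)))

/-- Edge list (each unordered edge listed once) of the graph `H6`. -/
def edgesH6 : List (Fin 12 × Fin 12) :=
  [(0, 1), (0, 3), (0, 5), (0, 7), (1, 2), (1, 4), (1, 5), (1, 8), (2, 3), (2, 4), (2, 9), (2, 11), (3, 4), (3, 10), (4, 5), (4, 11), (5, 6), (5, 8), (6, 7), (6, 8), (6, 9), (6, 11), (7, 8), (7, 10), (8, 9), (9, 10), (9, 11), (10, 11)]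

/-- The simple graph on vertex set `Fin 12` with the given edge set. -/
def H6 : SimpleGraph (Fin 12) :=
  SimpleGraph.fromRel (fun i j => (i, j) ∈ edgesH6)

instance : DecidableRel H6.Adj := fun a b =>
  inferInstanceAs (Decidable (a ≠ b ∧ ((a, b) ∈ edgesH6 ∨ (b, a) ∈ edgesH6)))

/-- Edge list (each unordered edge listed once) of the graph `H7`. -/
def edgesH7 : List (Fin 12 × Fin 12) :=
  [(0, 1), (0, 3), (0, 5), (0, 7), (1, 2), (1, 8), (1, 10), (2, 3), (2, 8), (2, 11), (3, 4), (3, 7), (4, 5), (4, 6), (4, 9), (4, 11), (5, 6), (5, 10), (5, 11), (6, 7), (6, 9), (6, 10), (7, 8), (8, 9), (9, 10), (9, 11), (10, 11)]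

/-- The simple graph on vertex set `Fin 12` with the given edge set. -/
def H7 : SimpleGraph (Fin 12) :=
  SimpleGraph.fromRel (fun i j => (i, j) ∈ edgesH7)

instance : DecidableRel H7.Adj := fun a b =>
  inferInstanceAs (Decidable (a ≠ b ∧ ((a, b) ∈ edgesH7 ∨ (b, a) ∈ edgesH7)))

/-- Edge list (each unordered edge listed once) of the graph `H9`. -/
def edgesH9 : List (Fin 12 × Fin 12) :=
  [(0, 1), (0, 3), (0, 5), (0, 7), (1, 2), (1, 8), (1, 10), (2, 3), (2, 8), (2, 11), (3, 4), (3, 7), (4, 5), (4, 6), (4, 9), (4, 10), (5, 6), (5, 9), (5, 11), (6, 7), (6, 10), (6, 11), (7, 8), (8, 9), (9, 10), (9, 11), (10, 11)]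

/-- The simple graph on vertex set `Fin 12` with the given edge set. -/
def H9 : SimpleGraph (Fin 12) :=
  SimpleGraph.fromRel (fun i j => (i, j) ∈ edgesH9)

instance : DecidableRel H9.Adj := fun a b =>
  inferInstanceAs (Decidable (a ≠ b ∧ ((a, b) ∈ edgesH9 ∨ (b, a) ∈ edgesH9)))

/-!
An isomorphism `G ≃g H` conjugates one adjacency matrix into the other, so the power traces
`tr (A ^ k)` are isomorphism invariants; they count the closed walks of length `k` and equal the
power sums of the roots of the characteristic polynomial. For the four graphs `k = 5` is the
smallest exponent for which all four values differ: `H7` and `H9` agree up to `k = 3`, and `H3` and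
`H6` agree for `k = 4`.
-/

theorem trace_reindex {m n R : Type*} [Fintype m] [Fintype n] [AddCommMonoid R] (e : m ≃ n)
    (A : Matrix m m R) : (A.reindex e e).trace = A.trace :=
  e.symm.sum_comp A.diag

section Iso

variable {V W : Type*} [Fintype V] [Fintype W] [DecidableEq V] [DecidableEq W]
  {G : SimpleGraph V} {H : SimpleGraph W} [DecidableRel G.Adj] [DecidableRel H.Adj]

theorem reindex_adjMatrix_pow (R : Type*) [Semiring R] (f : G ≃g H) (k : ℕ) :
    (G.adjMatrix R ^ k).reindex f f = H.adjMatrix R ^ k := by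
  rw [← f.reindex_adjMatrix R]
  exact map_pow (Matrix.reindexRingEquiv R f.toEquiv) _ k

theorem trace_adjMatrix_pow_congr (R : Type*) [Semiring R] (f : G ≃g H) (k : ℕ) :
    (G.adjMatrix R ^ k).trace = (H.adjMatrix R ^ k).trace := by
  rw [← reindex_adjMatrix_pow R f k]
  exact (trace_reindex f.toEquiv _).symm

theorem isEmpty_iso_of_trace_adjMatrix_pow_ne (R : Type*) [Semiring R] (k : ℕ)
    (h : (G.adjMatrix R ^ k).trace ≠ (H.adjMatrix R ^ k).trace) : IsEmpty (G ≃g H) :=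
  ⟨fun f => h (trace_adjMatrix_pow_congr R f k)⟩

end Iso

theorem trace_adjMatrix_H3_pow_five : (H3.adjMatrix ℕ ^ 5).trace = 1800 := by decide +kernel

theorem trace_adjMatrix_H6_pow_five : (H6.adjMatrix ℕ ^ 5).trace = 1960 := by decide +kernel

theorem trace_adjMatrix_H7_pow_five : (H7.adjMatrix ℕ ^ 5).trace = 1740 := by decide +kernel

theorem trace_adjMatrix_H9_pow_five : (H9.adjMatrix ℕ ^ 5).trace = 1860 := by decide +kernel

/-- The graphs are pairwise non-isomorphic. -/
theorem pairwise_nonisomorphic_torus_F :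
    IsEmpty (H3 ≃g H6) ∧
    IsEmpty (H3 ≃g H7) ∧
    IsEmpty (H3 ≃g H9) ∧
    IsEmpty (H6 ≃g H7) ∧
    IsEmpty (H6 ≃g H9) ∧
    IsEmpty (H7 ≃g H9) := by
  refine ⟨?_, ?_, ?_, ?_, ?_, ?_⟩ <;>
  · apply isEmpty_iso_of_trace_adjMatrix_pow_ne ℕ 5
    simp [trace_adjMatrix_H3_pow_five, trace_adjMatrix_H6_pow_five,
      trace_adjMatrix_H7_pow_five, trace_adjMatrix_H9_pow_five]
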